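/- arXiv:2305.08536 — 2 statements merged into one kernel-verified Lean document; each statement's English description precedes it below -/
import Mathlib

section
/- Let a ∈ {0,1}^{n×n} be the symmetric, zero-diagonal adjacency matrix of a simple undirected graph, let θ ∈ ℝ^n, and let ν be the uniform probability measure on [0, 2π). Then the expected number of edges cut by a random line through the origin with uniformly distributed normal direction satisfies ∫ ∑_{1≤i<j≤n} a_{ij} · 1{cos(θ_i − φ) cos(θ_j − φ) < 0} dν(φ) = ∑_{1≤i<j≤n} a_{ij} |θ_i − θ_j|_{S¹} / π. -/
open Real MeasureTheory Finset

/-- The circle distance `|x|_{S¹} = min_{k ∈ ℤ} |x - 2πk| ∈ [0, π]`. -/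
noncomputable def circleDist (x : ℝ) : ℝ := ⨅ k : ℤ, |x - 2 * Real.pi * k|

/-
The circle distance is the norm of `AddCircle (2 * π)`, and the cosine is strictly decreasing in it.
Since `2 cos (s - φ) cos (t - φ) = cos (s - t) - cos (2 φ - (s + t + π))`, the line with normal
direction `φ` separates the angles `s` and `t` exactly when `2 φ` lies in the open ball around
`s + t + π` of radius `|s - t|_{S¹}`. Doubling preserves the measure of the circle, so the cut
directions have the measure `2 |s - t|_{S¹}` of that ball.
-/

lemma norm_addCircle_coe_eq_iInf (T x : ℝ) : ‖(x : AddCircle T)‖ = ⨅ k : ℤ, |x - T * k| := by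
  refine le_antisymm (le_ciInf fun k => ?_) ?_
  · have hk : ((x - T * k : ℝ) : AddCircle T) = x := by
      rw [AddCircle.coe_sub, mul_comm, ← zsmul_eq_mul, AddCircle.coe_zsmul, AddCircle.coe_period,
        smul_zero, sub_zero]
    rw [← hk]
    exact QuotientAddGroup.norm_mk_le_norm
  · rw [AddCircle.norm_eq, mul_comm _ T]
    exact ciInf_le ⟨0, Set.forall_mem_range.2 fun _ => abs_nonneg _⟩ _

lemma circleDist_eq_norm (x : ℝ) : circleDist x = ‖(x : AddCircle (2 * π))‖ :=
  (norm_addCircle_coe_eq_iInf _ x).symm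

lemma norm_addCircle_two_pi_le_pi (x : AddCircle (2 * π)) : ‖x‖ ≤ π := by
  simpa [abs_of_pos pi_pos] using AddCircle.norm_le_half_period (2 * π) (x := x) two_pi_pos.ne'

lemma cos_norm_addCircle_coe (x : ℝ) : cos ‖(x : AddCircle (2 * π))‖ = cos x := by
  rw [AddCircle.norm_eq, cos_abs, cos_sub_int_mul_two_pi]

lemma cos_lt_cos_iff_norm_addCircle_lt {x y : ℝ} :
    cos x < cos y ↔ ‖(y : AddCircle (2 * π))‖ < ‖(x : AddCircle (2 * π))‖ := by
  rw [← cos_norm_addCircle_coe x, ← cos_norm_addCircle_coe y]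
  exact strictAntiOn_cos.lt_iff_gt ⟨norm_nonneg _, norm_addCircle_two_pi_le_pi _⟩
    ⟨norm_nonneg _, norm_addCircle_two_pi_le_pi _⟩

lemma cos_mul_cos_neg_iff_mem_ball (s t φ : ℝ) :
    cos (s - φ) * cos (t - φ) < 0 ↔
      (2 : ℤ) • (φ : AddCircle (2 * π)) ∈
        Metric.ball ((s + t + π : ℝ) : AddCircle (2 * π)) (circleDist (s - t)) := by
  have product_to_sum : 2 * (cos (s - φ) * cos (t - φ))
      = cos (s - t) - cos (2 * φ - (s + t + π)) := by
    rw [← mul_assoc, two_mul_cos_mul_cos, sub_sub_sub_cancel_right,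
      show 2 * φ - (s + t + π) = -(s - φ + (t - φ)) - π by ring, cos_sub_pi, cos_neg,
      sub_neg_eq_add]
  calc cos (s - φ) * cos (t - φ) < 0
      ↔ cos (s - t) < cos (2 * φ - (s + t + π)) := by constructor <;> intro h <;> linarith
    _ ↔ _ := by
      rw [cos_lt_cos_iff_norm_addCircle_lt, ← circleDist_eq_norm (s - t), mem_ball_iff_norm,
        AddCircle.coe_sub, ← AddCircle.coe_zsmul, zsmul_eq_mul, Int.cast_ofNat]

lemma volume_preimage_zsmul_ball {T : ℝ} [Fact (0 < T)] {n : ℤ} (hn : n ≠ 0) (x : AddCircle T)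
    (r : ℝ) : volume ((n • · : AddCircle T → AddCircle T) ⁻¹' Metric.ball x r)
      = ENNReal.ofReal (min T (2 * r)) := by
  have preserving := Measure.measurePreserving_zsmul (volume : Measure (AddCircle T)) hn
  rw [preserving.measure_preimage Metric.isOpen_ball.nullMeasurableSet,
    ← measure_congr AddCircle.closedBall_ae_eq_ball, AddCircle.volume_closedBall]

lemma volume_Ico_inter_preimage_coe {T : ℝ} [Fact (0 < T)] {S : Set (AddCircle T)}
    (hS : MeasurableSet S) (t : ℝ) :
    volume (Set.Ico t (t + T) ∩ ((↑) : ℝ → AddCircle T) ⁻¹' S) = volume S := by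
  have mk := AddCircle.measurePreserving_mk T t
  rw [Measure.restrict_congr_set Ico_ae_eq_Ioc.symm] at mk
  rw [Set.inter_comm, ← Measure.restrict_apply (mk.measurable hS),
    mk.measure_preimage hS.nullMeasurableSet]

lemma measurableSet_cos_mul_cos_neg (s t : ℝ) :
    MeasurableSet {φ : ℝ | cos (s - φ) * cos (t - φ) < 0} :=
  measurableSet_lt (by fun_prop) measurable_const

lemma volume_cos_mul_cos_neg (s t : ℝ) :
    volume (Set.Ico 0 (2 * π) ∩ {φ | cos (s - φ) * cos (t - φ) < 0})
      = ENNReal.ofReal (2 * circleDist (s - t)) := by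
  have : Fact (0 < 2 * π) := ⟨two_pi_pos⟩
  let B := Metric.ball ((s + t + π : ℝ) : AddCircle (2 * π)) (circleDist (s - t))
  have cut_eq : {φ | cos (s - φ) * cos (t - φ) < 0}
      = ((↑) : ℝ → AddCircle (2 * π)) ⁻¹' ((2 : ℤ) • ·) ⁻¹' B :=
    Set.ext fun φ => cos_mul_cos_neg_iff_mem_ball s t φ
  have hB : MeasurableSet (((2 : ℤ) • · : AddCircle (2 * π) → _) ⁻¹' B) :=
    measurable_const_smul (2 : ℤ) Metric.isOpen_ball.measurableSet
  have diameter_le : 2 * circleDist (s - t) ≤ 2 * π := by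
    rw [circleDist_eq_norm]
    gcongr
    exact norm_addCircle_two_pi_le_pi _
  have volume_Ico := volume_Ico_inter_preimage_coe hB 0
  rw [zero_add] at volume_Ico
  rw [cut_eq, volume_Ico, volume_preimage_zsmul_ball two_ne_zero, min_eq_right diameter_le]

lemma integrableOn_ite_cos_mul_cos_neg (s t : ℝ) :
    IntegrableOn (fun φ => if cos (s - φ) * cos (t - φ) < 0 then (1 : ℝ) else 0)
      (Set.Ico 0 (2 * π)) :=
  (integrableOn_const measure_Ico_lt_top.ne).indicator (measurableSet_cos_mul_cos_neg s t)

lemma setIntegral_ite_cos_mul_cos_neg (s t : ℝ) :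
    ∫ φ in Set.Ico 0 (2 * π), (if cos (s - φ) * cos (t - φ) < 0 then (1 : ℝ) else 0)
      = 2 * circleDist (s - t) := by
  have radius_nonneg : 0 ≤ circleDist (s - t) := circleDist_eq_norm (s - t) ▸ norm_nonneg _
  calc _ = ∫ φ in Set.Ico 0 (2 * π),
          {φ | cos (s - φ) * cos (t - φ) < 0}.indicator (fun _ => (1 : ℝ)) φ := rfl
    _ = volume.real (Set.Ico 0 (2 * π) ∩ {φ | cos (s - φ) * cos (t - φ) < 0}) := by
      rw [setIntegral_indicator (measurableSet_cos_mul_cos_neg s t), setIntegral_const,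
        smul_eq_mul, mul_one]
    _ = 2 * circleDist (s - t) := by
      rw [measureReal_def, volume_cos_mul_cos_neg, ENNReal.toReal_ofReal (by positivity)]

theorem expected_cut_edges_random_rounding_general {ι : Type*} (E : Finset (ι × ι))
    (w : ι → ι → ℝ) (θ : ι → ℝ) :
    (1 / (2 * π)) * ∫ φ in Set.Ico 0 (2 * π),
        (∑ e ∈ E, w e.1 e.2 * (if cos (θ e.1 - φ) * cos (θ e.2 - φ) < 0 then (1 : ℝ) else 0))
      = ∑ e ∈ E, w e.1 e.2 * circleDist (θ e.1 - θ e.2) / π := by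
  rw [integral_finsetSum _ fun _ _ => (integrableOn_ite_cos_mul_cos_neg _ _).const_mul _, mul_sum]
  refine sum_congr rfl fun e _ => ?_
  rw [integral_const_mul, setIntegral_ite_cos_mul_cos_neg]
  field_simp

/-- The expected number of edges cut by a random line through the origin
with uniformly distributed normal direction equals `∑_{i<j} a_ij |θ_i - θ_j|_{S¹} / π`. -/
theorem expected_cut_edges_random_rounding
    (n : ℕ) (a : Fin n → Fin n → ℝ)
    (hsym : ∀ i j, a i j = a j i) (hdiag : ∀ i, a i i = 0)
    (h01 : ∀ i j, a i j = 0 ∨ a i j = 1)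
    (θ : Fin n → ℝ) :
    (1 / (2 * Real.pi)) * ∫ φ in Set.Ico 0 (2 * Real.pi),
        (∑ i : Fin n, ∑ j : Fin n, if i < j then
            a i j * (if Real.cos (θ i - φ) * Real.cos (θ j - φ) < 0 then (1 : ℝ) else 0)
          else 0)
      = ∑ i : Fin n, ∑ j : Fin n,
          if i < j then a i j * circleDist (θ i - θ j) / Real.pi else 0 := by
  simpa only [sum_filter, Fintype.sum_prod_type] using
    expected_cut_edges_random_rounding_general {e | e.1 < e.2} a θ
end

section
/- Let a ∈ {0,1}^{n×n} be the symmetric, zero-diagonal adjacency matrix of a simple undirected graph, μ ≥ 0, and L(θ; a, μ) = ∑_{1≤i<j≤n} a_{ij} cos(θ_i − θ_j) + (μ/2) ∑_{i=1}^n sin²θ_i. If θ̲ ∈ ℝ^n is a global minimizer of L(·; a, μ), then ∑_{1≤i<j≤n} a_{ij} |θ̲_i − θ̲_j|_{S¹} / π ≥ 0.878 · W_mc. -/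
open Real Finset

/-! The relaxed cut `∑_{i<j} a_ij (1 - cos (θ_i - θ_j)) / 2` equals the cut weight at the angles
`0` and `π` of a cut, where the penalty vanishes, and it decreases affinely in the cosine energy.
Hence a configuration whose penalized energy is at most that of a cut has at least the relaxed cut
weight of that cut. The pointwise bound `0.878 (1 - cos x) / 2 ≤ |x|_{S¹} / π` of Goemans and
Williamson then passes from relaxed cuts to rounding expectations. -/

section CircleDist

theorem sq_sub_pow_four_div_three_le_sin_sq (x : ℝ) : x ^ 2 - x ^ 4 / 3 ≤ sin x ^ 2 := by
  wlog hx : 0 ≤ x generalizing x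
  · simpa [Even.neg_pow (by decide : Even 4)] using this (-x) (by linarith)
  rcases le_total (x ^ 2) 6 with hx6 | hx6
  · have htaylor_nonneg : 0 ≤ x - x ^ 3 / 6 := by
      nlinarith [mul_nonneg hx (sub_nonneg.2 hx6)]
    calc x ^ 2 - x ^ 4 / 3 ≤ (x - x ^ 3 / 6) ^ 2 := by nlinarith [sq_nonneg (x ^ 3)]
      _ ≤ sin x ^ 2 := pow_le_pow_left₀ htaylor_nonneg (sin_ge_sub_cube hx) 2
  · nlinarith [sq_nonneg (sin x), mul_nonneg (sq_nonneg x) (sub_nonneg.2 hx6)]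

-- The difference of the two sides has a minimum of about `0.001` near `x = 0.405`.
theorem two_mul_le_quartic {x : ℝ} (hx0 : 0 ≤ x) (hx1 : x ≤ 1.08) :
    2 * x ≤ 3.1415 * (0.122 + 0.878 * (x ^ 2 - x ^ 4 / 3)) := by
  nlinarith [mul_nonneg (sq_nonneg (x - 0.405)) (mul_nonneg hx0 (sub_nonneg.2 hx1)),
    mul_nonneg (sq_nonneg (x - 0.405)) (sub_nonneg.2 hx1), sq_nonneg (x - 0.405)]

theorem mul_pi_mul_cos_sq_le_pi_sub_two_mul {x : ℝ} (hx0 : 0 ≤ x) (hx1 : x ≤ 1.08) :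
    0.878 * π * cos x ^ 2 ≤ π - 2 * x := by
  have hsin := sq_sub_pow_four_div_three_le_sin_sq x
  have hx : 2 * x ≤ π * (0.122 + 0.878 * sin x ^ 2) :=
    calc 2 * x ≤ 3.1415 * (0.122 + 0.878 * (x ^ 2 - x ^ 4 / 3)) := two_mul_le_quartic hx0 hx1
      _ ≤ 3.1415 * (0.122 + 0.878 * sin x ^ 2) := by gcongr
      _ ≤ π * (0.122 + 0.878 * sin x ^ 2) := by gcongr; exact pi_gt_d4.le
  rw [cos_sq']
  linarith

theorem mul_one_sub_cos_div_two_le_div_pi {d : ℝ} (hd : 0 ≤ d) :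
    0.878 * ((1 - cos d) / 2) ≤ d / π := by
  rw [le_div_iff₀ pi_pos]
  rcases le_total d 1 with hd1 | hd1
  · have hcos : (1 - cos d) / 2 ≤ d / 4 := by nlinarith [one_sub_sq_div_two_le_cos (x := d)]
    calc 0.878 * ((1 - cos d) / 2) * π ≤ 0.878 * (d / 4) * 4 := by
          gcongr
          exact pi_le_four
      _ ≤ d := by linarith
  rcases le_total π d with hdπ | hdπ
  · calc 0.878 * ((1 - cos d) / 2) * π ≤ 0.878 * 1 * π := by
          gcongr
          linarith [neg_one_le_cos d]
      _ ≤ d := by linarith [pi_pos]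
  -- The bound is nearly tight around `d = 2.33`. The half-angle substitution brings this point to
  -- about `0.405`, where the cubic Taylor polynomial of the sine is accurate enough.
  · have hcos : (1 - cos d) / 2 = cos ((π - d) / 2) ^ 2 := by
      rw [cos_sq, mul_div_cancel₀ _ two_ne_zero, cos_pi_sub]
      ring
    have hbound : 0.878 * π * cos ((π - d) / 2) ^ 2 ≤ π - 2 * ((π - d) / 2) :=
      mul_pi_mul_cos_sq_le_pi_sub_two_mul (by linarith) (by linarith [pi_lt_d4])
    rw [hcos]
    linarith

theorem mul_one_sub_cos_div_two_le_circleDist_div_pi (x : ℝ) :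
    0.878 * ((1 - cos x) / 2) ≤ circleDist x / π := by
  rw [le_div_iff₀ pi_pos]
  refine le_ciInf fun k => ?_
  have hcos : cos |x - 2 * π * k| = cos x := by
    rw [cos_abs, mul_comm, cos_sub_int_mul_two_pi]
  rw [← le_div_iff₀ pi_pos, ← hcos]
  exact mul_one_sub_cos_div_two_le_div_pi (abs_nonneg _)

end CircleDist

section Cut

variable {ι : Type*} [Fintype ι] [LinearOrder ι]

/-- The weight of the edges `i < j` whose ends get different labels under `τ`. -/
noncomputable def cutWeight (a : ι → ι → ℝ) (τ : ι → ℝ) : ℝ :=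
  ∑ i, ∑ j, if i < j ∧ τ i ≠ τ j then a i j else 0

/-- The XY-model energy of the angles `θ`, i.e. the objective `L` without its penalty. -/
noncomputable def cosEnergy (a : ι → ι → ℝ) (θ : ι → ℝ) : ℝ :=
  ∑ i, ∑ j, if i < j then a i j * cos (θ i - θ j) else 0

/-- The objective `L(θ; a, μ)`, whose penalty term favours the angles `0` and `π`. -/
noncomputable def penalizedEnergy (a : ι → ι → ℝ) (μ : ℝ) (θ : ι → ℝ) : ℝ :=
  cosEnergy a θ + μ / 2 * ∑ i, sin (θ i) ^ 2

/-- The Goemans–Williamson objective `∑_{i<j} a_ij (1 - ⟪u_i, u_j⟫) / 2` at the unit vectors `u_i`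
of the plane with angles `θ_i`. -/
noncomputable def relaxedCut (a : ι → ι → ℝ) (θ : ι → ℝ) : ℝ :=
  ∑ i, ∑ j, if i < j then a i j * ((1 - cos (θ i - θ j)) / 2) else 0

/-- The expected weight of the cut obtained by splitting the circle along a uniformly random
diameter, which separates `θ_i` and `θ_j` with probability `|θ_i - θ_j|_{S¹} / π`. -/
noncomputable def roundingExpectation (a : ι → ι → ℝ) (θ : ι → ℝ) : ℝ :=
  ∑ i, ∑ j, if i < j then a i j * circleDist (θ i - θ j) / π else 0

theorem relaxedCut_sub_relaxedCut (a : ι → ι → ℝ) (θ φ : ι → ℝ) :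
    relaxedCut a θ - relaxedCut a φ = (cosEnergy a φ - cosEnergy a θ) / 2 := by
  simp only [relaxedCut, cosEnergy, ← sum_sub_distrib, sum_div]
  refine sum_congr rfl fun i _ => sum_congr rfl fun j _ => ?_
  split_ifs <;> ring

theorem cosEnergy_le_penalizedEnergy (a : ι → ι → ℝ) {μ : ℝ} (hμ : 0 ≤ μ) (θ : ι → ℝ) :
    cosEnergy a θ ≤ penalizedEnergy a μ θ :=
  le_add_of_nonneg_right (by positivity)

theorem mul_relaxedCut_le_roundingExpectation {a : ι → ι → ℝ} (ha : ∀ i j, i < j → 0 ≤ a i j)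
    {α : ℝ} (hα : ∀ x, α * ((1 - cos x) / 2) ≤ circleDist x / π) (θ : ι → ℝ) :
    α * relaxedCut a θ ≤ roundingExpectation a θ := by
  simp only [relaxedCut, roundingExpectation, mul_sum]
  refine sum_le_sum fun i _ => sum_le_sum fun j _ => ?_
  split_ifs with hij
  · rw [mul_left_comm, mul_div_assoc]
    exact mul_le_mul_of_nonneg_left (hα _) (ha i j hij)
  · rw [mul_zero]

-- On signs, `arccos` takes the values `arccos 1 = 0` and `arccos (-1) = π`.
theorem penalizedEnergy_arccos (a : ι → ι → ℝ) (μ : ℝ) {τ : ι → ℝ}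
    (hτ : ∀ i, τ i = 1 ∨ τ i = -1) :
    penalizedEnergy a μ (arccos ∘ τ) = cosEnergy a (arccos ∘ τ) := by
  have hsin (i : ι) : sin (arccos (τ i)) = 0 := by rcases hτ i with h | h <;> simp [h]
  simp [penalizedEnergy, hsin]

theorem relaxedCut_arccos (a : ι → ι → ℝ) {τ : ι → ℝ} (hτ : ∀ i, τ i = 1 ∨ τ i = -1) :
    relaxedCut a (arccos ∘ τ) = cutWeight a τ := by
  have hcos (i j : ι) :
      (1 - cos (arccos (τ i) - arccos (τ j))) / 2 = if τ i ≠ τ j then 1 else 0 := by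
    rcases hτ i with hi | hi <;> rcases hτ j with hj | hj <;> norm_num [hi, hj]
  simp only [relaxedCut, cutWeight, Function.comp_apply, hcos, mul_ite, mul_one, mul_zero, ite_and]

theorem cutWeight_le_relaxedCut (a : ι → ι → ℝ) {μ : ℝ} (hμ : 0 ≤ μ) {θ τ : ι → ℝ}
    (hτ : ∀ i, τ i = 1 ∨ τ i = -1)
    (hle : penalizedEnergy a μ θ ≤ penalizedEnergy a μ (arccos ∘ τ)) :
    cutWeight a τ ≤ relaxedCut a θ := by
  have henergy : cosEnergy a θ ≤ cosEnergy a (arccos ∘ τ) :=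
    calc cosEnergy a θ ≤ penalizedEnergy a μ θ := cosEnergy_le_penalizedEnergy a hμ θ
      _ ≤ penalizedEnergy a μ (arccos ∘ τ) := hle
      _ = cosEnergy a (arccos ∘ τ) := penalizedEnergy_arccos a μ hτ
  have hdiff := relaxedCut_sub_relaxedCut a θ (arccos ∘ τ)
  rw [← relaxedCut_arccos a hτ]
  linarith

theorem minimizer_rounding_expectation_ge_gw_ratio_mul_maxcut_general {a : ι → ι → ℝ}
    (ha : ∀ i j, i < j → 0 ≤ a i j) {μ : ℝ} (hμ : 0 ≤ μ) {θ τ : ι → ℝ}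
    (hτ : ∀ i, τ i = 1 ∨ τ i = -1)
    (hle : penalizedEnergy a μ θ ≤ penalizedEnergy a μ (arccos ∘ τ)) :
    0.878 * cutWeight a τ ≤ roundingExpectation a θ :=
  calc 0.878 * cutWeight a τ ≤ 0.878 * relaxedCut a θ := by
        gcongr
        exact cutWeight_le_relaxedCut a hμ hτ hle
    _ ≤ roundingExpectation a θ :=
        mul_relaxedCut_le_roundingExpectation ha mul_one_sub_cos_div_two_le_circleDist_div_pi θ

end Cut

/-- If `θ̲` is a global minimizer of the penalized max-cut objective
`L(θ; a, μ) = ∑_{i<j} a_ij cos(θ_i - θ_j) + (μ/2) ∑_i sin² θ_i`, then the rounding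
expectation satisfies `∑_{i<j} a_ij |θ̲_i - θ̲_j|_{S¹} / π ≥ 0.878 · W_mc`. -/
theorem minimizer_rounding_expectation_ge_gw_ratio_mul_maxcut
    (n : ℕ) (a : Fin n → Fin n → ℝ)
    (hsym : ∀ i j, a i j = a j i) (hdiag : ∀ i, a i i = 0)
    (h01 : ∀ i j, a i j = 0 ∨ a i j = 1)
    (μ : ℝ) (hμ : 0 ≤ μ)
    (L : (Fin n → ℝ) → ℝ)
    (hL : ∀ θ : Fin n → ℝ,
      L θ = (∑ i : Fin n, ∑ j : Fin n, if i < j then a i j * Real.cos (θ i - θ j) else 0)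
        + μ / 2 * ∑ i : Fin n, Real.sin (θ i) ^ 2)
    (θmin : Fin n → ℝ) (hmin : ∀ θ : Fin n → ℝ, L θmin ≤ L θ)
    (Wmc : ℝ)
    (hW : IsGreatest {w : ℝ | ∃ τ : Fin n → ℝ, (∀ i, τ i = 1 ∨ τ i = -1) ∧
        w = ∑ i : Fin n, ∑ j : Fin n, if i < j ∧ τ i ≠ τ j then a i j else 0} Wmc) :
    0.878 * Wmc ≤ ∑ i : Fin n, ∑ j : Fin n,
        if i < j then a i j * circleDist (θmin i - θmin j) / Real.pi else 0 := by
  obtain ⟨⟨τ, hτ, rfl⟩, -⟩ := hW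
  obtain rfl : L = penalizedEnergy a μ := funext hL
  exact minimizer_rounding_expectation_ge_gw_ratio_mul_maxcut_general
    (fun i j _ => (h01 i j).elim Eq.ge fun h => h ▸ zero_le_one) hμ hτ (hmin _)
end
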